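/- Let φ : ℂ → ℂ be holomorphic and injective on the right half-plane ℍ = {z ∈ ℂ : Re z > 0}. Then for every x > 1, every t ≥ 0, every κ ∈ (0,1) and every T ≥ 1 one has 2^{−t}·x^{−3t}·∫_{κT}^{T} |φ′(1 + iy)|^t dy ≤ ∫_{κT}^{T} |φ′(x + iy)|^t dy ≤ 8^t·x^{t}·∫_{κT}^{T} |φ′(1 + iy)|^t dy. -/

import Mathlib

open Complex intervalIntegral

open Metric MeasureTheory Set Filter Topology
open scoped Real

/-!
Let `f` be univalent on the unit disc with `f 0 = 0` and `f' 0 = 1`, write `f z = z exp (L z)`, and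
let `0 < β < 1/2`. The image of the annulus `ρ < |z| < r` avoids a disc about `0` whose radius is
asymptotic to `ρ`, so its area for the density `|w| ^ (-2 - 2β)` is at most that of the complement
of the disc. By change of variables this area is the integral over the annulus of
`|z| ^ (-2 - 2β) |h z| ^ 2` with `h = (1 + z L') exp (-β L)` holomorphic, and Parseval bounds it
below through the first two Taylor coefficients of `h`. The singular terms cancel as `ρ → 0`,
leaving `β (1 - β) r ^ 2 |L' 0| ^ 2 ≤ 1`; then `β → 1/2` and `r → 1` give Bieberbach's bound
`|f'' 0| = 2 |L' 0| ≤ 4`.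

Carried to the half-plane by Cayley maps, Bieberbach's bound reads `|x φ'' + φ'| ≤ 2 |φ'|` at points
with real part `x`. In the coordinate `s = log x` this says that `x φ'` has logarithmic derivative
at most `2`, so Grönwall's inequality compares `φ'` on two vertical lines pointwise.
-/

section CircleAverage

variable {G : ℂ → ℂ} {c : ℂ} {r R : ℝ}

lemma circleAverage_norm_sq (hG : DifferentiableOn ℂ G (ball c R)) (hr : |r| < R) :
    Real.circleAverage (fun z ↦ ‖G z‖ ^ 2) c r
      = ‖G c‖ ^ 2 + r ^ 2 * Real.circleAverage (fun z ↦ ‖dslope G c z‖ ^ 2) c r := by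
  have hball : closedBall c |r| ⊆ ball c R := closedBall_subset_ball hr
  have hcircle {E : Type} [NormedAddCommGroup E] {h : ℂ → E} (hh : ContinuousOn h (ball c R)) :
      CircleIntegrable h c r :=
    (hh.mono (sphere_subset_closedBall.trans hball)).circleIntegrable'
  have hslope : DifferentiableOn ℂ (dslope G c) (ball c R) :=
    (differentiableOn_dslope (ball_mem_nhds c ((abs_nonneg r).trans_lt hr))).2 hG
  let tail : ℂ → ℂ := fun z ↦ (z - c) • dslope G c z
  have htail : DifferentiableOn ℂ tail (ball c R) := by fun_prop
  have hexpand : EqOn (fun z ↦ ‖G z‖ ^ 2)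
      (fun z ↦ (‖G c‖ ^ 2 + r ^ 2 • ‖dslope G c z‖ ^ 2) + (2 : ℝ) • inner ℝ (G c) (tail z))
      (sphere c |r|) := by
    intro z hz
    have hGz : G z = G c + tail z := eq_add_of_sub_eq' (sub_smul_dslope G c z).symm
    have hnorm : ‖z - c‖ ^ 2 = r ^ 2 := by rw [mem_sphere_iff_norm.1 hz, sq_abs]
    have htail_norm : ‖tail z‖ ^ 2 = r ^ 2 * ‖dslope G c z‖ ^ 2 := by
      rw [norm_smul, mul_pow, hnorm]
    simp only [hGz, norm_add_sq_real, htail_norm, smul_eq_mul]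
    ring
  have hmean : Real.circleAverage (fun z ↦ inner ℝ (G c) (tail z)) c r = 0 := by
    have hcenter : Real.circleAverage tail c r = 0 := by
      simpa [tail] using (htail.diffContOnCl_ball hball).circleAverage
    refine ((innerSL ℝ (G c)).circleAverage_comp_comm (hcircle htail.continuousOn)).trans ?_
    rw [hcenter, map_zero]
  have hslope_cont := hslope.continuousOn
  have htail_cont := htail.continuousOn
  rw [Real.circleAverage_congr_sphere hexpand,
    Real.circleAverage_fun_add (hcircle (by fun_prop)) (hcircle (by fun_prop)),
    Real.circleAverage_fun_add (hcircle (by fun_prop)) (hcircle (by fun_prop)),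
    Real.circleAverage_const, Real.circleAverage_fun_smul, Real.circleAverage_fun_smul, hmean,
    smul_zero, add_zero, smul_eq_mul]

lemma norm_sq_le_circleAverage_norm_sq (hG : DifferentiableOn ℂ G (ball c R)) (hr : |r| < R) :
    ‖G c‖ ^ 2 ≤ Real.circleAverage (fun z ↦ ‖G z‖ ^ 2) c r := by
  rw [circleAverage_norm_sq hG hr, le_add_iff_nonneg_right]
  exact mul_nonneg (sq_nonneg r)
    (Real.circleAverage_nonneg_of_nonneg fun z _ ↦ sq_nonneg ‖dslope G c z‖)

lemma norm_sq_add_norm_deriv_sq_le_circleAverage_norm_sq (hG : DifferentiableOn ℂ G (ball c R))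
    (hr : |r| < R) :
    ‖G c‖ ^ 2 + r ^ 2 * ‖deriv G c‖ ^ 2 ≤ Real.circleAverage (fun z ↦ ‖G z‖ ^ 2) c r := by
  have hslope : DifferentiableOn ℂ (dslope G c) (ball c R) :=
    (differentiableOn_dslope (ball_mem_nhds c ((abs_nonneg r).trans_lt hr))).2 hG
  rw [circleAverage_norm_sq hG hr, ← dslope_same G c]
  gcongr
  exact norm_sq_le_circleAverage_norm_sq hslope hr

end CircleAverage

section Annulus

variable {ρ r : ℝ}

lemma setIntegral_norm_preimage_Ioo {E : Type*} [NormedAddCommGroup E] [NormedSpace ℝ E]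
    {H : ℂ → E} (hρ : 0 ≤ ρ) (hρr : ρ ≤ r) (hH : ContinuousOn H (norm ⁻¹' Icc ρ r)) :
    ∫ z in norm ⁻¹' Ioo ρ r, H z = ∫ s in ρ..r, (2 * π * s) • Real.circleAverage H 0 s := by
  have hsymm (p : ℝ × ℝ) : Complex.polarCoord.symm p = circleMap 0 p.1 p.2 := by
    simp [Complex.polarCoord_symm_apply, circleMap, Complex.exp_mul_I]
  have hindicator : EqOn
      (fun p ↦ p.1 • (norm ⁻¹' Ioo ρ r).indicator H (Complex.polarCoord.symm p))
      ((Ioo ρ r ×ˢ Ioo (-π) π).indicator fun p ↦ p.1 • H (circleMap 0 p.1 p.2))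
      polarCoord.target := by
    rintro ⟨s, θ⟩ ⟨hs : 0 < s, hθ : θ ∈ Ioo (-π) π⟩
    by_cases hsr : s ∈ Ioo ρ r <;> simp [hsymm, indicator, abs_of_pos hs, hsr, hθ, -mem_Ioo]
  have hsub : Ioo ρ r ×ˢ Ioo (-π) π ⊆ polarCoord.target :=
    prod_mono (fun s hs ↦ hρ.trans_lt hs.1) Subset.rfl
  have hint : IntegrableOn (fun p : ℝ × ℝ ↦ p.1 • H (circleMap 0 p.1 p.2))
      (Ioo ρ r ×ˢ Ioo (-π) π) := by
    refine (ContinuousOn.integrableOn_compact (isCompact_Icc.prod isCompact_Icc) ?_).mono_set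
      (prod_mono Ioo_subset_Icc_self Ioo_subset_Icc_self)
    refine continuousOn_fst.smul (hH.comp (by unfold circleMap; fun_prop) ?_)
    rintro ⟨s, θ⟩ ⟨hs, -⟩
    simpa [abs_of_nonneg (hρ.trans hs.1)] using hs
  have hcircle (s : ℝ) : ∫ θ in Ioo (-π) π, s • H (circleMap 0 s θ)
      = (2 * π * s) • Real.circleAverage H 0 s := by
    rw [Real.circleAverage_eq_integral_add (-π),
      intervalIntegral.integral_comp_add_right (fun θ ↦ H (circleMap 0 s θ)),
      MeasureTheory.integral_smul, ← integral_Ioc_eq_integral_Ioo,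
      ← intervalIntegral.integral_of_le (by linarith [Real.pi_pos]), smul_smul]
    congr 1
    · field_simp
    · congr 1 <;> ring
  rw [← MeasureTheory.integral_indicator (measurableSet_Ioo.preimage measurable_norm),
    ← Complex.integral_comp_polarCoord_symm,
    setIntegral_congr_fun polarCoord.open_target.measurableSet hindicator,
    setIntegral_indicator (measurableSet_Ioo.prod measurableSet_Ioo),
    inter_eq_self_of_subset_right hsub, Measure.volume_eq_prod, setIntegral_prod _ hint,
    intervalIntegral.integral_of_le hρr, integral_Ioc_eq_integral_Ioo]
  simp only [hcircle]

lemma integral_norm_sq_add_le_setIntegral_norm_sq {G : ℂ → ℂ} {w : ℝ → ℝ} {R : ℝ}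
    (hρ : 0 ≤ ρ) (hρr : ρ ≤ r) (hrR : r < R) (hG : DifferentiableOn ℂ G (ball 0 R))
    (hw : ContinuousOn w (Icc ρ r)) (hw0 : ∀ s ∈ Icc ρ r, 0 ≤ w s) :
    2 * π * ∫ s in ρ..r, s * w s * (‖G 0‖ ^ 2 + s ^ 2 * ‖deriv G 0‖ ^ 2)
      ≤ ∫ z in norm ⁻¹' Ioo ρ r, w ‖z‖ * ‖G z‖ ^ 2 := by
  have hsub : norm ⁻¹' Icc ρ r ⊆ ball (0 : ℂ) R := fun z hz ↦
    mem_ball_zero_iff.2 (hz.2.trans_lt hrR)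
  have hcont : ContinuousOn (fun z ↦ w ‖z‖ * ‖G z‖ ^ 2) (norm ⁻¹' Icc ρ r) :=
    (hw.comp continuous_norm.continuousOn fun _ hz ↦ hz).mul
      ((hG.continuousOn.mono hsub).norm.pow 2)
  have hradial : ∀ s ∈ Icc ρ r, Real.circleAverage (fun z ↦ w ‖z‖ * ‖G z‖ ^ 2) 0 s
      = w s * Real.circleAverage (fun z ↦ ‖G z‖ ^ 2) 0 s := by
    intro s hs
    rw [← smul_eq_mul, ← Real.circleAverage_fun_smul]
    refine Real.circleAverage_congr_sphere fun z hz ↦ ?_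
    simp [mem_sphere_zero_iff_norm.1 hz, abs_of_nonneg (hρ.trans hs.1)]
  rw [setIntegral_norm_preimage_Ioo hρ hρr hcont, ← intervalIntegral.integral_const_mul]
  refine intervalIntegral.integral_mono_on hρr ?_ ?_ fun s hs ↦ ?_
  · exact ContinuousOn.intervalIntegrable_of_Icc hρr (by fun_prop)
  · refine ContinuousOn.intervalIntegrable_of_Icc hρr ?_
    have havg : ContinuousOn (Real.circleAverage (fun z ↦ w ‖z‖ * ‖G z‖ ^ 2) 0) (Icc ρ r) :=
      Real.ContinuousOn.circleAverage (by simp only [sub_zero]; exact hcont)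
        fun s hs ↦ hρ.trans hs.1
    fun_prop
  · have hs0 : 0 ≤ s := hρ.trans hs.1
    have hsR : |s| < R := by rw [abs_of_nonneg hs0]; exact hs.2.trans_lt hrR
    have := mul_le_mul_of_nonneg_left (norm_sq_add_norm_deriv_sq_le_circleAverage_norm_sq hG hsR)
      (mul_nonneg hs0 (hw0 s hs))
    rw [hradial s hs, smul_eq_mul]
    calc _ = 2 * π * (s * w s * (‖G 0‖ ^ 2 + s ^ 2 * ‖deriv G 0‖ ^ 2)) := by ring
      _ ≤ 2 * π * (s * w s * Real.circleAverage (fun z ↦ ‖G z‖ ^ 2) 0 s) := by gcongr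
      _ = _ := by ring

end Annulus

lemma det_restrictScalars_toSpanSingleton (a : ℂ) :
    ((ContinuousLinearMap.toSpanSingleton ℂ a).restrictScalars ℝ).det = ‖a‖ ^ 2 := by
  simp [ContinuousLinearMap.det, LinearMap.det_restrictScalars, Algebra.norm_complex_eq,
    Complex.normSq_eq_norm_sq]

lemma setIntegral_image_eq_setIntegral_norm_deriv_sq_smul {E : Type*} [NormedAddCommGroup E]
    [NormedSpace ℝ E] {f : ℂ → ℂ} {U : Set ℂ} (hU : IsOpen U) (hf : DifferentiableOn ℂ f U)
    (hinj : InjOn f U) (h : ℂ → E) :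
    ∫ w in f '' U, h w = ∫ z in U, ‖deriv f z‖ ^ 2 • h (f z) := by
  have hderiv (z : ℂ) (hz : z ∈ U) : HasFDerivWithinAt f
      ((ContinuousLinearMap.toSpanSingleton ℂ (deriv f z)).restrictScalars ℝ) U z :=
    (((hf z hz).differentiableAt (hU.mem_nhds hz)).hasDerivAt.hasFDerivAt.restrictScalars
      ℝ).hasFDerivWithinAt
  rw [integral_image_eq_integral_abs_det_fderiv_smul volume hU.measurableSet hderiv hinj]
  simp only [det_restrictScalars_toSpanSingleton, abs_of_nonneg (sq_nonneg ‖deriv f _‖)]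

section Radial

variable {g : ℝ → ℝ} {S : Set ℝ}

lemma integrableOn_fun_norm_iff (hS : MeasurableSet S) (hpos : S ⊆ Ioi 0) :
    IntegrableOn (fun w : ℂ ↦ g ‖w‖) (norm ⁻¹' S) ↔ IntegrableOn (fun s ↦ s * g s) S := by
  have hindicator : (norm ⁻¹' S).indicator (fun w : ℂ ↦ g ‖w‖) = fun w ↦ S.indicator g ‖w‖ := rfl
  have hmul (s : ℝ) : s * S.indicator g s = S.indicator (fun s ↦ s * g s) s :=
    (indicator_mul_right S (fun s ↦ s) g).symm
  rw [← integrable_indicator_iff (hS.preimage measurable_norm), hindicator,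
    integrable_fun_norm_addHaar volume]
  simp only [finrank_real_complex, Nat.add_one_sub_one, pow_one, smul_eq_mul, hmul]
  rw [integrableOn_indicator_iff hS, inter_eq_self_of_subset_left hpos]

lemma setIntegral_fun_norm (hS : MeasurableSet S) (hpos : S ⊆ Ioi 0) :
    ∫ w : ℂ in norm ⁻¹' S, g ‖w‖ = 2 * π * ∫ s in S, s * g s := by
  have hindicator : (norm ⁻¹' S).indicator (fun w : ℂ ↦ g ‖w‖) = fun w ↦ S.indicator g ‖w‖ := rfl
  have hmul (s : ℝ) : s * S.indicator g s = S.indicator (fun s ↦ s * g s) s :=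
    (indicator_mul_right S (fun s ↦ s) g).symm
  have hball : volume.real (ball (0 : ℂ) 1) = π := by simp [Measure.real, Complex.volume_ball]
  rw [← MeasureTheory.integral_indicator (hS.preimage measurable_norm), hindicator,
    integral_fun_norm_addHaar volume]
  simp only [finrank_real_complex, Nat.add_one_sub_one, pow_one, smul_eq_mul, hball, hmul]
  rw [setIntegral_indicator hS, inter_eq_self_of_subset_right hpos, nsmul_eq_mul, mul_assoc,
    Nat.cast_ofNat]

end Radial

lemma mul_rpow_eqOn_Ici {m p : ℝ} (hm : 0 < m) :
    EqOn (fun s : ℝ ↦ s * s ^ p) (fun s ↦ s ^ (p + 1)) (Ici m) := fun s hs ↦ by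
  simp only [Real.rpow_add_one (hm.trans_le hs).ne', mul_comm]

lemma integrableOn_norm_rpow_Ici {m p : ℝ} (hm : 0 < m) (hp : p < -2) :
    IntegrableOn (fun w : ℂ ↦ ‖w‖ ^ p) (norm ⁻¹' Ici m) := by
  rw [integrableOn_fun_norm_iff (g := (· ^ p)) measurableSet_Ici (Ici_subset_Ioi.2 hm),
    integrableOn_congr_fun (mul_rpow_eqOn_Ici hm) measurableSet_Ici,
    integrableOn_Ici_iff_integrableOn_Ioi]
  exact integrableOn_Ioi_rpow_of_lt (by linarith) hm

lemma setIntegral_norm_rpow_Ici {m p : ℝ} (hm : 0 < m) (hp : p < -2) :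
    ∫ w : ℂ in norm ⁻¹' Ici m, ‖w‖ ^ p = 2 * π * (m ^ (p + 2) / (-p - 2)) := by
  rw [setIntegral_fun_norm (g := (· ^ p)) measurableSet_Ici (Ici_subset_Ioi.2 hm),
    setIntegral_congr_fun measurableSet_Ici (mul_rpow_eqOn_Ici hm),
    integral_Ici_eq_integral_Ioi, integral_Ioi_rpow_of_lt (by linarith) hm]
  rw [show p + 1 + 1 = p + 2 by ring, neg_div, ← div_neg, neg_add']

lemma setIntegral_norm_deriv_sq_mul_norm_rpow_le {f : ℂ → ℂ} {U : Set ℂ} {m p : ℝ}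
    (hU : IsOpen U) (hf : DifferentiableOn ℂ f U) (hinj : InjOn f U) (hm : 0 < m) (hp : p < -2)
    (hmf : ∀ z ∈ U, m ≤ ‖f z‖) :
    ∫ z in U, ‖deriv f z‖ ^ 2 * ‖f z‖ ^ p ≤ 2 * π * (m ^ (p + 2) / (-p - 2)) :=
  calc ∫ z in U, ‖deriv f z‖ ^ 2 * ‖f z‖ ^ p = ∫ w in f '' U, ‖w‖ ^ p :=
        (setIntegral_image_eq_setIntegral_norm_deriv_sq_smul hU hf hinj fun w ↦ ‖w‖ ^ p).symm
    _ ≤ ∫ w : ℂ in norm ⁻¹' Ici m, ‖w‖ ^ p :=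
        setIntegral_mono_set (integrableOn_norm_rpow_Ici hm hp)
          (.of_forall fun w ↦ by positivity) (LE.le.eventuallyLE (image_subset_iff.2 hmf))
    _ = 2 * π * (m ^ (p + 2) / (-p - 2)) := setIntegral_norm_rpow_Ici hm hp

lemma exists_differentiableOn_exp_eqOn_ball {g : ℂ → ℂ} {c l : ℂ} {R : ℝ}
    (hg : DifferentiableOn ℂ g (ball c R)) (hne : ∀ z ∈ ball c R, g z ≠ 0) (hl : exp l = g c) :
    ∃ L : ℂ → ℂ, DifferentiableOn ℂ L (ball c R) ∧ L c = l ∧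
      EqOn (fun z ↦ exp (L z)) g (ball c R) := by
  obtain ⟨L, hLc, hL⟩ :=
    (((hg.deriv isOpen_ball).div hg hne).isExactOn_ball).with_val_at c l
  refine ⟨L, fun z hz ↦ (hL z hz).differentiableAt.differentiableWithinAt, hLc, fun z hz ↦ ?_⟩
  have hquotient (w : ℂ) (hw : w ∈ ball c R) :
      HasDerivAt (fun w ↦ exp (L w) / g w) 0 w := by
    have hgw := (hg.differentiableAt (isOpen_ball.mem_nhds hw)).hasDerivAt
    refine ((hL w hw).cexp.div hgw (hne w hw)).congr_deriv ?_
    have := hne w hw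
    simp only [Pi.div_apply]
    field_simp
    ring
  have hconst : exp (L z) / g z = exp (L c) / g c :=
    isOpen_ball.is_const_of_deriv_eq_zero (convex_ball c R).isPreconnected
      (fun w hw ↦ (hquotient w hw).differentiableAt.differentiableWithinAt)
      (fun w hw ↦ (hquotient w hw).deriv) hz (mem_ball_self (pos_of_mem_ball hz))
  rwa [hLc, hl, div_self (hl ▸ exp_ne_zero l), div_eq_one_iff_eq (hne z hz)] at hconst

/-- A schlicht function: a holomorphic injection of the open unit disc into the plane, normalised
by `f 0 = 0` and `f' 0 = 1`. -/
structure IsSchlicht (f : ℂ → ℂ) : Prop where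
  differentiableOn : DifferentiableOn ℂ f (ball 0 1)
  injOn : InjOn f (ball 0 1)
  map_zero : f 0 = 0
  deriv_zero : deriv f 0 = 1

lemma IsSchlicht.exists_eqOn_mul_exp {f : ℂ → ℂ} (hf : IsSchlicht f) :
    ∃ L : ℂ → ℂ, DifferentiableOn ℂ L (ball 0 1) ∧ L 0 = 0 ∧
      EqOn f (fun z ↦ z * exp (L z)) (ball 0 1) := by
  have h0 : (0 : ℂ) ∈ ball (0 : ℂ) 1 := mem_ball_self one_pos
  have hfz (z : ℂ) : f z = z * dslope f 0 z := by
    simpa [hf.map_zero] using (sub_smul_dslope f 0 z).symm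
  have hne (z : ℂ) (hz : z ∈ ball 0 1) : dslope f 0 z ≠ 0 := by
    rcases eq_or_ne z 0 with rfl | hz0
    · simp [hf.deriv_zero]
    · intro hslope
      exact hz0 (hf.injOn hz h0 (by rw [hfz, hslope, mul_zero, hf.map_zero]))
  obtain ⟨L, hL, hL0, hexp⟩ := exists_differentiableOn_exp_eqOn_ball (l := 0)
    ((differentiableOn_dslope (isOpen_ball.mem_nhds h0)).2 hf.differentiableOn) hne
    (by simp [hf.deriv_zero])
  exact ⟨L, hL, hL0, fun z hz ↦ by rw [hfz, ← hexp hz]⟩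

/-- If `f z = z * exp (L z)`, this is the function `f' · (f / z) ^ (-(1 + β))`, where powers of
`f / z` are taken with the branch `L` of its logarithm; it is written through `L` alone so that
it makes sense at `0`. Its square modulus is the Jacobian of `f` when source and target carry the
density `‖z‖ ^ (-2 - 2 * β)`. -/
noncomputable def weightedDeriv (L : ℂ → ℂ) (β : ℝ) (z : ℂ) : ℂ :=
  exp (-β * L z) * (1 + z * deriv L z)

section WeightedDeriv

variable {f L : ℂ → ℂ} {β : ℝ} {U : Set ℂ} {z : ℂ}

lemma weightedDeriv_zero (hL0 : L 0 = 0) : weightedDeriv L β 0 = 1 := by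
  simp [weightedDeriv, hL0]

lemma differentiableOn_weightedDeriv (hU : IsOpen U) (hL : DifferentiableOn ℂ L U) :
    DifferentiableOn ℂ (weightedDeriv L β) U := by
  have := hL.deriv hU
  unfold weightedDeriv
  fun_prop

lemma deriv_weightedDeriv_zero (hL : AnalyticAt ℂ L 0) (hL0 : L 0 = 0) :
    deriv (weightedDeriv L β) 0 = (1 - β) * deriv L 0 := by
  have hexp := (hL.differentiableAt.hasDerivAt.const_mul (-β : ℂ)).cexp
  have hfactor := ((hasDerivAt_id (0 : ℂ)).mul hL.deriv.differentiableAt.hasDerivAt).const_add 1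
  refine (hexp.mul hfactor).deriv.trans ?_
  simp only [hL0, mul_zero, exp_zero, neg_mul, mul_neg, one_mul, Pi.mul_apply, id_eq, zero_mul,
    add_zero, mul_one]
  ring

lemma deriv_eq_weightedDeriv (hU : IsOpen U) (hL : DifferentiableOn ℂ L U)
    (hfL : EqOn f (fun z ↦ z * exp (L z)) U) : EqOn (deriv f) (weightedDeriv L (-1)) U := by
  intro z hz
  have hLz := (hL.differentiableAt (hU.mem_nhds hz)).hasDerivAt
  have hderiv : HasDerivAt (fun z ↦ z * exp (L z)) _ z := (hasDerivAt_id z).mul hLz.cexp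
  rw [(hfL.eventuallyEq_of_mem (hU.mem_nhds hz)).deriv_eq, hderiv.deriv]
  simp only [one_mul, id_eq, weightedDeriv, ofReal_neg, ofReal_one, neg_neg]
  ring

lemma norm_deriv_sq_mul_norm_rpow (hf : f z = z * exp (L z))
    (hf' : deriv f z = weightedDeriv L (-1) z) :
    ‖deriv f z‖ ^ 2 * ‖f z‖ ^ (-2 - 2 * β) = ‖z‖ ^ (-2 - 2 * β) * ‖weightedDeriv L β z‖ ^ 2 := by
  have hnorm (γ : ℝ) :
      ‖weightedDeriv L γ z‖ = Real.exp (-γ * (L z).re) * ‖1 + z * deriv L z‖ := by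
    simp [weightedDeriv, norm_exp]
  have hexp : Real.exp (L z).re ^ 2 * Real.exp ((L z).re * (-2 - 2 * β))
      = Real.exp (-β * (L z).re) ^ 2 := by
    rw [← Real.exp_nat_mul, ← Real.exp_nat_mul, ← Real.exp_add]
    push_cast
    ring_nf
  rw [hf', hf, norm_mul, norm_exp, Real.mul_rpow (norm_nonneg z) (Real.exp_pos _).le,
    ← Real.exp_mul, hnorm, hnorm, neg_neg, one_mul]
  linear_combination ‖1 + z * deriv L z‖ ^ 2 * ‖z‖ ^ (-2 - 2 * β) * hexp

end WeightedDeriv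

lemma exists_norm_le_mul_norm_sub {L : ℂ → ℂ} {c : ℂ} {r R : ℝ} (hr : r < R)
    (hL : DifferentiableOn ℂ L (ball c R)) :
    ∃ C, 0 ≤ C ∧ ∀ z ∈ closedBall c r, ‖L z - L c‖ ≤ C * ‖z - c‖ := by
  rcases lt_or_ge r 0 with hr0 | hr0
  · exact ⟨0, le_rfl, by simp [closedBall_eq_empty.2 hr0]⟩
  have hslope := (differentiableOn_dslope (ball_mem_nhds c (hr0.trans_lt hr))).2 hL
  obtain ⟨C, hC⟩ := (isCompact_closedBall c r).exists_bound_of_continuousOn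
    (hslope.continuousOn.mono (closedBall_subset_ball hr))
  refine ⟨C, (norm_nonneg _).trans (hC c (mem_closedBall_self hr0)), fun z hz ↦ ?_⟩
  rw [← sub_smul_dslope, norm_smul, mul_comm]
  exact mul_le_mul_of_nonneg_right (hC z hz) (norm_nonneg _)

lemma mul_exp_neg_le_mul_exp_neg {C ρ s : ℝ} (hC : 0 ≤ C) (hρ : 0 < ρ) (hρC : ρ ≤ Real.exp (-C))
    (hρs : ρ ≤ s) (hs : s ≤ 1) : ρ * Real.exp (-(C * ρ)) ≤ s * Real.exp (-(C * s)) := by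
  have hconcave : ConcaveOn ℝ (Ioi 0) fun s ↦ Real.log s - C * s :=
    strictConcaveOn_log_Ioi.concaveOn.sub ((convexOn_id (convex_Ioi 0)).smul hC)
  have hlog : Real.log ρ ≤ -C := (Real.log_le_iff_le_exp hρ).2 hρC
  have hmin := hconcave.min_le_of_mem_Icc hρ (mem_Ioi.2 one_pos) ⟨hρs, hs⟩
  rw [min_eq_left (by rw [Real.log_one]; nlinarith)] at hmin
  have hs0 := hρ.trans_le hρs
  rw [← Real.log_le_log_iff (by positivity) (by positivity), Real.log_mul hρ.ne' (by positivity),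
    Real.log_mul hs0.ne' (by positivity), Real.log_exp, Real.log_exp]
  exact hmin

lemma tendsto_rpow_nhdsGT_zero {a : ℝ} (ha : 0 < a) :
    Tendsto (fun ρ : ℝ ↦ ρ ^ a) (𝓝[>] 0) (𝓝 0) := by
  have := (Real.continuousAt_rpow_const 0 a (.inr ha.le)).tendsto
  rw [Real.zero_rpow ha.ne'] at this
  exact this.mono_left nhdsWithin_le_nhds

lemma tendsto_rpow_mul_exp_sub_one {a k : ℝ} (ha : -1 < a) :
    Tendsto (fun ρ : ℝ ↦ ρ ^ a * (Real.exp (k * ρ) - 1)) (𝓝[>] 0) (𝓝 0) := by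
  have hslope : Tendsto (fun ρ : ℝ ↦ ρ⁻¹ * (Real.exp (k * ρ) - 1)) (𝓝[>] 0) (𝓝 k) := by
    have := ((hasDerivAt_id (0 : ℝ)).const_mul k).exp.tendsto_slope_zero_right
    simpa using this
  have hprod := (tendsto_rpow_nhdsGT_zero (show 0 < a + 1 by linarith)).mul hslope
  rw [zero_mul] at hprod
  refine hprod.congr' (eventually_mem_nhdsWithin.mono fun ρ (hρ : 0 < ρ) ↦ ?_)
  simp only [Real.rpow_add_one hρ.ne']
  field_simp

lemma integral_rpow_mul_one_add_sq {b β ρ r : ℝ} (hρ : 0 < ρ) (hr : 0 < r) (hβ0 : β ≠ 0)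
    (hβ1 : β ≠ 1) :
    ∫ s in ρ..r, s * s ^ (-2 - 2 * β) * (1 + s ^ 2 * b)
      = (ρ ^ (-2 * β) - r ^ (-2 * β)) / (2 * β)
        + (r ^ (2 - 2 * β) - ρ ^ (2 - 2 * β)) / (2 - 2 * β) * b := by
  have hpos (s : ℝ) (hs : s ∈ uIcc ρ r) : 0 < s := (lt_min hρ hr).trans_le hs.1
  have h0 : (0 : ℝ) ∉ uIcc ρ r := fun h ↦ (hpos 0 h).false
  have hsplit : EqOn (fun s : ℝ ↦ s * s ^ (-2 - 2 * β) * (1 + s ^ 2 * b))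
      (fun s ↦ s ^ (-1 - 2 * β) + s ^ (1 - 2 * β) * b) (uIcc ρ r) := by
    intro s hs
    have hs0 := hpos s hs
    have h1 : s ^ (-1 - 2 * β) = s * s ^ (-2 - 2 * β) := by
      rw [show -1 - 2 * β = -2 - 2 * β + 1 by ring, Real.rpow_add_one hs0.ne', mul_comm s]
    have h2 : s ^ (1 - 2 * β) = s ^ 2 * (s * s ^ (-2 - 2 * β)) := by
      rw [show 1 - 2 * β = -1 - 2 * β + (2 : ℕ) by push_cast; ring,
        Real.rpow_add_natCast hs0.ne', h1, mul_comm (s ^ 2)]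
    simp only [h1, h2]
    ring
  have hint (p : ℝ) : IntervalIntegrable (fun s : ℝ ↦ s ^ p) volume ρ r :=
    intervalIntegrable_rpow (.inr h0)
  have hβ0' : -1 - 2 * β ≠ -1 := fun h ↦ hβ0 (by linarith)
  have hβ1' : 1 - 2 * β ≠ -1 := fun h ↦ hβ1 (by linarith)
  rw [intervalIntegral.integral_congr hsplit, intervalIntegral.integral_add (hint _)
    ((hint _).mul_const b), intervalIntegral.integral_mul_const, integral_rpow (.inr ⟨hβ0', h0⟩),
    integral_rpow (.inr ⟨hβ1', h0⟩), show -1 - 2 * β + 1 = -2 * β by ring,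
    show 1 - 2 * β + 1 = 2 - 2 * β by ring, neg_mul, div_neg, ← neg_div, neg_sub]

lemma mul_exp_neg_le_norm {f L : ℂ → ℂ} {C : ℝ} {z : ℂ} (hf : f z = z * exp (L z))
    (hLC : ‖L z‖ ≤ C * ‖z‖) : ‖z‖ * Real.exp (-(C * ‖z‖)) ≤ ‖f z‖ := by
  rw [hf, norm_mul, norm_exp]
  gcongr
  linarith [(abs_le.1 (abs_re_le_norm (L z))).1]

section Annulus

variable {f L : ℂ → ℂ} {β C ρ r : ℝ}

lemma IsSchlicht.setIntegral_annulus_le (hf : IsSchlicht f)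
    (hfL : EqOn f (fun z ↦ z * exp (L z)) (ball 0 1)) (hβ : 0 < β) (hρ : 0 < ρ) (hr : r < 1)
    (hC : 0 ≤ C) (hLC : ∀ z ∈ closedBall 0 r, ‖L z‖ ≤ C * ‖z‖) (hρC : ρ ≤ Real.exp (-C)) :
    ∫ z in norm ⁻¹' Ioo ρ r, ‖deriv f z‖ ^ 2 * ‖f z‖ ^ (-2 - 2 * β)
      ≤ 2 * π * (ρ ^ (-2 * β) * Real.exp (2 * β * C * ρ) / (2 * β)) := by
  have hsub : norm ⁻¹' Ioo ρ r ⊆ ball (0 : ℂ) 1 := fun z hz ↦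
    mem_ball_zero_iff.2 (hz.2.trans hr)
  have hmin (z : ℂ) (hz : z ∈ norm ⁻¹' Ioo ρ r) : ρ * Real.exp (-(C * ρ)) ≤ ‖f z‖ :=
    (mul_exp_neg_le_mul_exp_neg hC hρ hρC hz.1.le (hz.2.trans hr).le).trans
      (mul_exp_neg_le_norm (hfL (hsub hz)) (hLC z (mem_closedBall_zero_iff.2 hz.2.le)))
  convert setIntegral_norm_deriv_sq_mul_norm_rpow_le (isOpen_Ioo.preimage continuous_norm)
    (hf.differentiableOn.mono hsub) (hf.injOn.mono hsub) (by positivity)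
    (show -2 - 2 * β < -2 by linarith) hmin using 3
  · rw [show -2 - 2 * β + 2 = -2 * β by ring, Real.mul_rpow hρ.le (Real.exp_pos _).le,
      ← Real.exp_mul]
    ring_nf
  · ring

lemma le_setIntegral_annulus (hL : DifferentiableOn ℂ L (ball 0 1)) (hL0 : L 0 = 0)
    (hfL : EqOn f (fun z ↦ z * exp (L z)) (ball 0 1)) (hβ0 : β ≠ 0) (hβ1 : β ≠ 1) (hρ : 0 < ρ)
    (hρr : ρ ≤ r) (hr : r < 1) :
    2 * π * ((ρ ^ (-2 * β) - r ^ (-2 * β)) / (2 * β)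
        + (r ^ (2 - 2 * β) - ρ ^ (2 - 2 * β)) / (2 - 2 * β) * ‖(1 - β) * deriv L 0‖ ^ 2)
      ≤ ∫ z in norm ⁻¹' Ioo ρ r, ‖deriv f z‖ ^ 2 * ‖f z‖ ^ (-2 - 2 * β) := by
  have hpos (s : ℝ) (hs : s ∈ Icc ρ r) : 0 < s := hρ.trans_le hs.1
  have hdensity : EqOn (fun z ↦ ‖deriv f z‖ ^ 2 * ‖f z‖ ^ (-2 - 2 * β))
      (fun z ↦ ‖z‖ ^ (-2 - 2 * β) * ‖weightedDeriv L β z‖ ^ 2) (norm ⁻¹' Ioo ρ r) := by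
    intro z hz
    have hz1 : z ∈ ball 0 1 := mem_ball_zero_iff.2 (hz.2.trans hr)
    exact norm_deriv_sq_mul_norm_rpow (hfL hz1) (deriv_eq_weightedDeriv isOpen_ball hL hfL hz1)
  have hmean := integral_norm_sq_add_le_setIntegral_norm_sq (w := (· ^ (-2 - 2 * β))) hρ.le hρr hr
    (differentiableOn_weightedDeriv (β := β) isOpen_ball hL)
    (fun s hs ↦ (Real.continuousAt_rpow_const s _ (.inl (hpos s hs).ne')).continuousWithinAt)
    (fun s hs ↦ Real.rpow_nonneg (hpos s hs).le _)
  rwa [weightedDeriv_zero hL0,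
    deriv_weightedDeriv_zero (hL.analyticAt (ball_mem_nhds 0 one_pos)) hL0, norm_one, one_pow,
    integral_rpow_mul_one_add_sq hρ (hρ.trans_le hρr) hβ0 hβ1,
    ← setIntegral_congr_fun (measurableSet_Ioo.preimage measurable_norm) hdensity] at hmean

end Annulus

namespace IsSchlicht

lemma annulus_norm_sq_le {f L : ℂ → ℂ} {β C ρ r : ℝ} (hf : IsSchlicht f)
    (hL : DifferentiableOn ℂ L (ball 0 1)) (hL0 : L 0 = 0)
    (hfL : EqOn f (fun z ↦ z * exp (L z)) (ball 0 1)) (hβ0 : 0 < β) (hβ1 : β ≠ 1) (hρ : 0 < ρ)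
    (hρr : ρ ≤ r) (hr : r < 1) (hC : 0 ≤ C) (hLC : ∀ z ∈ closedBall 0 r, ‖L z‖ ≤ C * ‖z‖)
    (hρC : ρ ≤ Real.exp (-C)) :
    (r ^ (2 - 2 * β) - ρ ^ (2 - 2 * β)) / (2 - 2 * β) * ‖(1 - β) * deriv L 0‖ ^ 2
      ≤ (r ^ (-2 * β) + ρ ^ (-2 * β) * (Real.exp (2 * β * C * ρ) - 1)) / (2 * β) := by
  have hbounds := le_of_mul_le_mul_left
    ((le_setIntegral_annulus hL hL0 hfL hβ0.ne' hβ1 hρ hρr hr).trans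
      (hf.setIntegral_annulus_le hfL hβ0 hρ hr hC hLC hρC)) Real.two_pi_pos
  linear_combination hbounds

lemma sq_norm_deriv_log_le {f L : ℂ → ℂ} {β r : ℝ} (hf : IsSchlicht f)
    (hL : DifferentiableOn ℂ L (ball 0 1)) (hL0 : L 0 = 0)
    (hfL : EqOn f (fun z ↦ z * exp (L z)) (ball 0 1)) (hβ : β ∈ Ioo 0 (1 / 2))
    (hr : r ∈ Ioo 0 1) : β * (1 - β) * r ^ 2 * ‖deriv L 0‖ ^ 2 ≤ 1 := by
  obtain ⟨hβ0, hβ1⟩ := hβ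
  have hβ2 : 0 < 2 - 2 * β := by linarith
  obtain ⟨C, hC, hLC⟩ := exists_norm_le_mul_norm_sub hr.2 hL
  simp only [hL0, sub_zero] at hLC
  have hannulus : ∀ᶠ ρ in 𝓝[>] 0,
      (r ^ (2 - 2 * β) - ρ ^ (2 - 2 * β)) / (2 - 2 * β) * ‖(1 - β) * deriv L 0‖ ^ 2
        ≤ (r ^ (-2 * β) + ρ ^ (-2 * β) * (Real.exp (2 * β * C * ρ) - 1)) / (2 * β) := by
    filter_upwards [Ioo_mem_nhdsGT (lt_min hr.1 (Real.exp_pos (-C)))] with ρ ⟨hρ, hρmin⟩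
    obtain ⟨hρr, hρC⟩ := lt_min_iff.1 hρmin
    exact hf.annulus_norm_sq_le hL hL0 hfL hβ0 (by linarith) hρ hρr.le hr.2 hC hLC hρC.le
  have hlimit := le_of_tendsto_of_tendsto
    ((((tendsto_rpow_nhdsGT_zero hβ2).const_sub (r ^ (2 - 2 * β))).div_const _).mul_const _)
    (((tendsto_rpow_mul_exp_sub_one (by linarith)).const_add (r ^ (-2 * β))).div_const _) hannulus
  have hnorm : ‖(1 - β) * deriv L 0‖ = (1 - β) * ‖deriv L 0‖ := by
    rw [norm_mul, ← ofReal_one, ← ofReal_sub, norm_real, Real.norm_of_nonneg (by linarith)]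
  have hr2 : r ^ (2 - 2 * β) = r ^ (-2 * β) * r ^ 2 := by
    rw [← Real.rpow_add_natCast hr.1.ne']
    ring_nf
  rw [sub_zero, add_zero, hnorm, hr2, div_mul_eq_mul_div, div_le_div_iff₀ hβ2 (by positivity)]
    at hlimit
  refine le_of_mul_le_mul_left ?_ (mul_pos hβ2 (Real.rpow_pos_of_pos hr.1 (-2 * β)))
  linear_combination hlimit

lemma norm_deriv_deriv_zero_le {f : ℂ → ℂ} (hf : IsSchlicht f) : ‖deriv (deriv f) 0‖ ≤ 4 := by
  obtain ⟨L, hL, hL0, hfL⟩ := hf.exists_eqOn_mul_exp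
  have h0 : ball (0 : ℂ) 1 ∈ 𝓝 0 := ball_mem_nhds 0 one_pos
  have hderiv : deriv (deriv f) 0 = 2 * deriv L 0 := by
    rw [((deriv_eq_weightedDeriv isOpen_ball hL hfL).eventuallyEq_of_mem h0).deriv_eq,
      deriv_weightedDeriv_zero (hL.analyticAt h0) hL0]
    norm_num
  have hlimit : Tendsto (fun r : ℝ ↦ r / 2 * (1 - r / 2) * r ^ 2 * ‖deriv L 0‖ ^ 2) (𝓝[<] 1)
      (𝓝 (1 / 2 * (1 - 1 / 2) * 1 ^ 2 * ‖deriv L 0‖ ^ 2)) :=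
    (Continuous.tendsto (by fun_prop) _).mono_left nhdsWithin_le_nhds
  have hle : 1 / 2 * (1 - 1 / 2) * 1 ^ 2 * ‖deriv L 0‖ ^ 2 ≤ 1 := by
    refine le_of_tendsto hlimit ?_
    filter_upwards [Ioo_mem_nhdsLT zero_lt_one] with r hr
    exact hf.sq_norm_deriv_log_le hL hL0 hfL ⟨half_pos hr.1, by linarith [hr.2]⟩ hr
  have hL2 : ‖deriv L 0‖ ≤ 2 := by nlinarith [norm_nonneg (deriv L 0)]
  rw [hderiv, norm_mul, Complex.norm_ofNat]
  linarith

end IsSchlicht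

lemma norm_deriv_deriv_zero_le_of_injOn_ball {f : ℂ → ℂ} (hf : DifferentiableOn ℂ f (ball 0 1))
    (hinj : InjOn f (ball 0 1)) (hf' : deriv f 0 ≠ 0) :
    ‖deriv (deriv f) 0‖ ≤ 4 * ‖deriv f 0‖ := by
  have hscaled : IsSchlicht fun z ↦ (f z - f 0) / deriv f 0 :=
    ⟨(hf.sub_const _).div_const _, fun z hz w hw hzw ↦ hinj hz hw (by simpa [hf'] using hzw),
      by simp only [sub_self, zero_div],
      by rw [deriv_div_const, deriv_sub_const_fun, div_self hf']⟩
  have hderiv : deriv (fun z ↦ (f z - f 0) / deriv f 0) = fun z ↦ deriv f z / deriv f 0 := by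
    funext z
    rw [deriv_div_const, deriv_sub_const_fun]
  have hbound := hscaled.norm_deriv_deriv_zero_le
  rwa [hderiv, deriv_div_const, norm_div, div_le_iff₀ (norm_pos_iff.2 hf')] at hbound

/-- For `0 < z.re`, the Cayley map carrying the unit disc conformally onto the half-plane `0 < re`
and `0` to `z`. -/
noncomputable def cayley (z w : ℂ) : ℂ := z - 2 * z.re + 2 * z.re * (1 - w)⁻¹

section Cayley

variable {z w : ℂ}

lemma cayley_zero (z : ℂ) : cayley z 0 = z := by simp [cayley]

lemma re_cayley_pos (hz : 0 < z.re) (hw : w ∈ ball 0 1) : 0 < (cayley z w).re := by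
  have hw1 : ‖w‖ < 1 := mem_ball_zero_iff.1 hw
  have hnormSq : normSq w < 1 := by
    rw [normSq_eq_norm_sq]
    exact pow_lt_one₀ (norm_nonneg w) hw1 two_ne_zero
  have hinv : 1 / 2 < ((1 - w)⁻¹).re := by
    have hne : 1 - w ≠ 0 := sub_ne_zero.2 (by rintro rfl; simp at hw1)
    rw [inv_re, lt_div_iff₀ (normSq_pos.2 hne)]
    simp only [normSq_apply, sub_re, sub_im, one_re, one_im] at hnormSq ⊢
    linarith
  have hre : (cayley z w).re = 2 * z.re * ((1 - w)⁻¹.re - 1 / 2) := by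
    simp only [cayley, add_re, sub_re, mul_re, re_ofNat, ofReal_re, im_ofNat, ofReal_im, mul_zero,
      sub_zero, mul_im, zero_mul, add_zero]
    ring
  rw [hre]
  exact mul_pos (by positivity) (sub_pos.2 hinv)

lemma cayley_injective (hz : z.re ≠ 0) : Function.Injective (cayley z) := by
  intro w v hwv
  have hz' : (2 * z.re : ℂ) ≠ 0 := mul_ne_zero two_ne_zero (ofReal_ne_zero.2 hz)
  exact sub_right_injective (inv_injective (mul_left_cancel₀ hz' (add_left_cancel hwv)))

lemma hasDerivAt_cayley (z : ℂ) (hw : w ≠ 1) :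
    HasDerivAt (cayley z) (2 * z.re * ((1 - w) ^ 2)⁻¹) w := by
  refine (((((hasDerivAt_id w).const_sub 1).inv (sub_ne_zero.2 hw.symm)).const_mul
    (2 * (z.re : ℂ))).const_add (z - 2 * z.re)).congr_deriv ?_
  simp [div_eq_mul_inv]

lemma deriv_comp_cayley {φ : ℂ → ℂ} (hφ : DifferentiableAt ℂ φ (cayley z w)) (hw : w ≠ 1) :
    deriv (φ ∘ cayley z) w = deriv φ (cayley z w) * (2 * z.re * ((1 - w) ^ 2)⁻¹) :=
  (hφ.hasDerivAt.comp w (hasDerivAt_cayley z hw)).deriv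

lemma deriv_deriv_comp_cayley_zero {φ : ℂ → ℂ} (hφ : AnalyticAt ℂ φ z) :
    deriv (deriv (φ ∘ cayley z)) 0 = 4 * z.re * (z.re * deriv (deriv φ) z + deriv φ z) := by
  have hcayley : HasDerivAt (cayley z) (2 * z.re * ((1 - 0) ^ 2)⁻¹) 0 :=
    hasDerivAt_cayley z zero_ne_one
  have hderiv : deriv (φ ∘ cayley z) =ᶠ[𝓝 0]
      fun w ↦ deriv φ (cayley z w) * (2 * z.re * ((1 - w) ^ 2)⁻¹) := by
    have hanalytic : ∀ᶠ w in 𝓝 0, AnalyticAt ℂ φ (cayley z w) :=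
      hcayley.continuousAt.eventually (by simpa [cayley_zero] using hφ.eventually_analyticAt)
    filter_upwards [hanalytic, isOpen_ne.mem_nhds (zero_ne_one : (0 : ℂ) ≠ 1)] with w hφw hw
    exact deriv_comp_cayley hφw.differentiableAt hw
  have hfactor := ((((hasDerivAt_id (0 : ℂ)).const_sub 1).pow 2).inv (by simp)).const_mul
    (2 * (z.re : ℂ))
  have hφ' : HasDerivAt (deriv φ) (deriv (deriv φ) z) (cayley z 0) := by
    rw [cayley_zero]
    exact hφ.deriv.differentiableAt.hasDerivAt
  rw [hderiv.deriv_eq]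
  refine ((hφ'.comp 0 hcayley).mul hfactor).deriv.trans ?_
  simp only [sub_zero, one_pow, inv_one, mul_one, id_eq, Pi.inv_apply, Pi.pow_apply,
    Function.comp_apply, cayley_zero, Nat.cast_ofNat, Nat.add_one_sub_one, mul_neg, neg_neg,
    div_one]
  ring

end Cayley

lemma isOpen_setOf_re_pos : IsOpen {z : ℂ | 0 < z.re} :=
  isOpen_lt continuous_const continuous_re

lemma norm_re_mul_deriv_deriv_add_deriv_le_of_ne_zero {φ : ℂ → ℂ}
    (hφ : DifferentiableOn ℂ φ {z | 0 < z.re}) (hinj : InjOn φ {z | 0 < z.re}) {z : ℂ}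
    (hz : 0 < z.re) (hφz : deriv φ z ≠ 0) :
    ‖z.re * deriv (deriv φ) z + deriv φ z‖ ≤ 2 * ‖deriv φ z‖ := by
  have hφat {w : ℂ} (hw : 0 < w.re) : DifferentiableAt ℂ φ w :=
    hφ.differentiableAt (isOpen_setOf_re_pos.mem_nhds hw)
  have hne {w : ℂ} (hw : w ∈ ball 0 1) : w ≠ 1 := by
    rintro rfl
    simp at hw
  have hdiff : DifferentiableOn ℂ (φ ∘ cayley z) (ball 0 1) := fun w hw ↦
    ((hφat (re_cayley_pos hz hw)).comp w
      (hasDerivAt_cayley z (hne hw)).differentiableAt).differentiableWithinAt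
  have hinj' : InjOn (φ ∘ cayley z) (ball 0 1) :=
    hinj.comp (cayley_injective hz.ne').injOn fun w hw ↦ re_cayley_pos hz hw
  have hderiv : deriv (φ ∘ cayley z) 0 = deriv φ z * (2 * z.re) := by
    rw [deriv_comp_cayley (by rw [cayley_zero]; exact hφat hz) zero_ne_one, cayley_zero]
    simp
  have hz0 : (2 * z.re : ℂ) ≠ 0 := mul_ne_zero two_ne_zero (ofReal_ne_zero.2 hz.ne')
  have hbound := norm_deriv_deriv_zero_le_of_injOn_ball hdiff hinj'
    (by rw [hderiv]; exact mul_ne_zero hφz hz0)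
  rw [hderiv, deriv_deriv_comp_cayley_zero (hφ.analyticAt (isOpen_setOf_re_pos.mem_nhds hz))]
    at hbound
  simp only [norm_mul, Complex.norm_ofNat, norm_real, Real.norm_of_nonneg hz.le] at hbound
  refine le_of_mul_le_mul_left ?_ (by positivity : 0 < 4 * z.re)
  linear_combination hbound

lemma eventually_deriv_ne_zero_of_injOn {f : ℂ → ℂ} {U : Set ℂ} {z : ℂ}
    (hf : DifferentiableOn ℂ f U) (hinj : InjOn f U) (hU : U ∈ 𝓝 z) :
    ∀ᶠ w in 𝓝[≠] z, deriv f w ≠ 0 := by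
  refine (hf.analyticAt hU).deriv.eventually_eq_zero_or_eventually_ne_zero.resolve_left fun h ↦ ?_
  obtain ⟨ε, hε, hball⟩ := eventually_nhds_iff_ball.1 (h.and hU)
  have hconst : ∀ w ∈ ball z ε, f w = f z := fun w hw ↦
    isOpen_ball.is_const_of_deriv_eq_zero (convex_ball z ε).isPreconnected
      (hf.mono fun v hv ↦ (hball v hv).2) (fun v hv ↦ (hball v hv).1) hw (mem_ball_self hε)
  have hnear : ∀ᶠ w in 𝓝[≠] z, w ∈ ball z ε ∧ w ≠ z :=
    (eventually_nhdsWithin_of_eventually_nhds (ball_mem_nhds z hε)).and eventually_mem_nhdsWithin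
  obtain ⟨w, hwz, hw⟩ := hnear.exists
  exact hw (hinj (hball w hwz).2 (mem_of_mem_nhds hU) (hconst w hwz))

lemma norm_re_mul_deriv_deriv_add_deriv_le {φ : ℂ → ℂ}
    (hφ : DifferentiableOn ℂ φ {z | 0 < z.re}) (hinj : InjOn φ {z | 0 < z.re}) {z : ℂ}
    (hz : 0 < z.re) : ‖z.re * deriv (deriv φ) z + deriv φ z‖ ≤ 2 * ‖deriv φ z‖ := by
  have hz' : {z : ℂ | 0 < z.re} ∈ 𝓝 z := isOpen_setOf_re_pos.mem_nhds hz
  have hanalytic : AnalyticAt ℂ φ z := hφ.analyticAt hz'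
  have h1 : ContinuousAt (deriv φ) z := hanalytic.deriv.continuousAt
  have h2 : ContinuousAt (deriv (deriv φ)) z := hanalytic.deriv.deriv.continuousAt
  have hleft : ContinuousAt (fun w : ℂ ↦ ‖w.re * deriv (deriv φ) w + deriv φ w‖) z := by fun_prop
  have hright : ContinuousAt (fun w ↦ 2 * ‖deriv φ w‖) z := by fun_prop
  refine le_of_tendsto_of_tendsto (b := 𝓝[≠] z) (hleft.tendsto.mono_left nhdsWithin_le_nhds)
    (hright.tendsto.mono_left nhdsWithin_le_nhds) ?_
  filter_upwards [eventually_deriv_ne_zero_of_injOn hφ hinj hz', nhdsWithin_le_nhds hz']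
    with w hw hwre
  exact norm_re_mul_deriv_deriv_add_deriv_le_of_ne_zero hφ hinj hwre hw

section Gronwall

variable {E : Type*} [NormedAddCommGroup E] [NormedSpace ℝ E] {v v' : ℝ → E} {K : ℝ}

lemma norm_le_norm_mul_exp_of_norm_deriv_le {a b : ℝ} (hv : ∀ s, HasDerivAt v (v' s) s)
    (hK : ∀ s, ‖v' s‖ ≤ K * ‖v s‖) (hab : a ≤ b) : ‖v b‖ ≤ ‖v a‖ * Real.exp (K * (b - a)) := by
  rw [← gronwallBound_ε0]
  exact norm_le_gronwallBound_of_norm_deriv_right_le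
    (fun s _ ↦ (hv s).continuousAt.continuousWithinAt) (fun s _ ↦ (hv s).hasDerivWithinAt) le_rfl
    (fun s _ ↦ by simpa using hK s) b ⟨hab, le_rfl⟩

lemma norm_le_norm_mul_exp_abs_of_norm_deriv_le (hv : ∀ s, HasDerivAt v (v' s) s)
    (hK : ∀ s, ‖v' s‖ ≤ K * ‖v s‖) (a b : ℝ) : ‖v b‖ ≤ ‖v a‖ * Real.exp (K * |b - a|) := by
  rcases le_total a b with hab | hba
  · rw [abs_of_nonneg (sub_nonneg.2 hab)]
    exact norm_le_norm_mul_exp_of_norm_deriv_le hv hK hab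
  · have hreflect (s : ℝ) : HasDerivAt (fun s ↦ v (-s)) (-v' (-s)) s := by
      simpa [Function.comp_def] using (hv (-s)).scomp s (hasDerivAt_neg s)
    have hbound := norm_le_norm_mul_exp_of_norm_deriv_le hreflect
      (fun s ↦ by simpa using hK (-s)) (neg_le_neg hba)
    rw [abs_of_nonpos (sub_nonpos.2 hba), neg_sub]
    simpa [neg_add_eq_sub] using hbound

end Gronwall

section HalfPlane

variable {φ : ℂ → ℂ} {x₁ x₂ : ℝ}

lemma hasDerivAt_exp_mul_deriv (hφ : DifferentiableOn ℂ φ {z | 0 < z.re}) (y s : ℝ) :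
    HasDerivAt (fun s : ℝ ↦ (Real.exp s : ℂ) * deriv φ (Real.exp s + y * I))
      (Real.exp s * (Real.exp s * deriv (deriv φ) (Real.exp s + y * I)
        + deriv φ (Real.exp s + y * I))) s := by
  have hre : 0 < (Real.exp s + y * I : ℂ).re := by simpa [-ofReal_exp] using Real.exp_pos s
  have hexp : HasDerivAt (fun s : ℝ ↦ (Real.exp s : ℂ)) (Real.exp s) s :=
    (Real.hasDerivAt_exp s).ofReal_comp
  have hφ' : HasDerivAt (deriv φ) (deriv (deriv φ) (Real.exp s + y * I)) (Real.exp s + y * I) :=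
    (hφ.analyticAt (isOpen_setOf_re_pos.mem_nhds hre)).deriv.differentiableAt.hasDerivAt
  refine (hexp.mul (hφ'.comp s (hexp.add_const _))).congr_deriv ?_
  rw [Function.comp_apply]
  ring

lemma mul_norm_deriv_le_mul_exp (hφ : DifferentiableOn ℂ φ {z | 0 < z.re})
    (hinj : InjOn φ {z | 0 < z.re}) (hx₁ : 0 < x₁) (hx₂ : 0 < x₂) (y : ℝ) :
    x₂ * ‖deriv φ (x₂ + y * I)‖
      ≤ x₁ * ‖deriv φ (x₁ + y * I)‖ * Real.exp (2 * |Real.log (x₂ / x₁)|) := by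
  have hgrowth (s : ℝ) :
      ‖(Real.exp s : ℂ) * (Real.exp s * deriv (deriv φ) (Real.exp s + y * I)
          + deriv φ (Real.exp s + y * I))‖
        ≤ 2 * ‖(Real.exp s : ℂ) * deriv φ (Real.exp s + y * I)‖ := by
    have hre : (Real.exp s + y * I : ℂ).re = Real.exp s := by simp [-ofReal_exp]
    have hbound := norm_re_mul_deriv_deriv_add_deriv_le hφ hinj (hre ▸ Real.exp_pos s)
    rw [hre] at hbound
    rw [norm_mul, norm_mul, mul_left_comm]
    gcongr
  have := norm_le_norm_mul_exp_abs_of_norm_deriv_le (hasDerivAt_exp_mul_deriv hφ y) hgrowth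
    (Real.log x₁) (Real.log x₂)
  rwa [Real.exp_log hx₁, Real.exp_log hx₂, ← Real.log_div hx₂.ne' hx₁.ne', norm_mul, norm_mul,
    norm_real, norm_real, Real.norm_of_nonneg hx₁.le, Real.norm_of_nonneg hx₂.le] at this

lemma exp_two_mul_abs_log {u : ℝ} (hu : 1 ≤ u) : Real.exp (2 * |Real.log u|) = u ^ 2 := by
  rw [abs_of_nonneg (Real.log_nonneg hu), ← Nat.cast_ofNat, Real.exp_nat_mul,
    Real.exp_log (one_pos.trans_le hu)]

lemma norm_deriv_le_div_mul (hφ : DifferentiableOn ℂ φ {z | 0 < z.re})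
    (hinj : InjOn φ {z | 0 < z.re}) (hx₁ : 0 < x₁) (hx : x₁ ≤ x₂) (y : ℝ) :
    ‖deriv φ (x₂ + y * I)‖ ≤ x₂ / x₁ * ‖deriv φ (x₁ + y * I)‖ := by
  have hx₂ : 0 < x₂ := hx₁.trans_le hx
  have hbound := mul_norm_deriv_le_mul_exp hφ hinj hx₁ hx₂ y
  rw [exp_two_mul_abs_log ((one_le_div hx₁).2 hx)] at hbound
  refine le_of_mul_le_mul_left (hbound.trans_eq ?_) hx₂
  field_simp

lemma norm_deriv_le_div_pow_three_mul (hφ : DifferentiableOn ℂ φ {z | 0 < z.re})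
    (hinj : InjOn φ {z | 0 < z.re}) (hx₁ : 0 < x₁) (hx : x₁ ≤ x₂) (y : ℝ) :
    ‖deriv φ (x₁ + y * I)‖ ≤ (x₂ / x₁) ^ 3 * ‖deriv φ (x₂ + y * I)‖ := by
  have hx₂ : 0 < x₂ := hx₁.trans_le hx
  have hbound := mul_norm_deriv_le_mul_exp hφ hinj hx₂ hx₁ y
  rw [← inv_div, Real.log_inv, abs_neg, exp_two_mul_abs_log ((one_le_div hx₁).2 hx)] at hbound
  refine le_of_mul_le_mul_left (hbound.trans_eq ?_) hx₁
  field_simp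

lemma intervalIntegrable_norm_deriv_rpow (hφ : DifferentiableOn ℂ φ {z | 0 < z.re}) {x t : ℝ}
    (hx : 0 < x) (ht : 0 ≤ t) (a b : ℝ) :
    IntervalIntegrable (fun y : ℝ ↦ ‖deriv φ (x + y * I)‖ ^ t) volume a b := by
  have hcont : Continuous fun y : ℝ ↦ deriv φ (x + y * I) :=
    (hφ.deriv isOpen_setOf_re_pos).continuousOn.comp_continuous (by fun_prop)
      fun y ↦ by simpa using hx
  exact (hcont.norm.rpow_const fun _ ↦ .inr ht).intervalIntegrable a b

end HalfPlane

lemma integral_rpow_le_rpow_mul_integral_rpow {f g : ℝ → ℝ} {a b c t : ℝ} (hab : a ≤ b)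
    (ht : 0 ≤ t) (hc : 0 ≤ c) (hf : ∀ y, 0 ≤ f y) (hg : ∀ y, 0 ≤ g y) (hfg : ∀ y, f y ≤ c * g y)
    (hfint : IntervalIntegrable (fun y ↦ f y ^ t) volume a b)
    (hgint : IntervalIntegrable (fun y ↦ g y ^ t) volume a b) :
    ∫ y in a..b, f y ^ t ≤ c ^ t * ∫ y in a..b, g y ^ t := by
  rw [← intervalIntegral.integral_const_mul]
  refine intervalIntegral.integral_mono hab hfint (hgint.const_mul _) fun y ↦ ?_
  rw [← Real.mul_rpow hc (hg y)]
  exact Real.rpow_le_rpow (hf y) (hfg y) ht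

theorem integral_means_comparison_general {φ : ℂ → ℂ}
    (hdiff : DifferentiableOn ℂ φ {z : ℂ | 0 < z.re})
    (hinj : InjOn φ {z : ℂ | 0 < z.re}) {x₁ x₂ t a b : ℝ} (hx₁ : 0 < x₁) (hx : x₁ ≤ x₂)
    (ht : 0 ≤ t) (hab : a ≤ b) :
    (x₂ / x₁) ^ (-(3 * t)) * (∫ y in a..b, ‖deriv φ (x₁ + y * I)‖ ^ t)
        ≤ ∫ y in a..b, ‖deriv φ (x₂ + y * I)‖ ^ t ∧
      ∫ y in a..b, ‖deriv φ (x₂ + y * I)‖ ^ t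
        ≤ (x₂ / x₁) ^ t * ∫ y in a..b, ‖deriv φ (x₁ + y * I)‖ ^ t := by
  have hx₂ : 0 < x₂ := hx₁.trans_le hx
  have hratio : 0 < x₂ / x₁ := div_pos hx₂ hx₁
  have hint₁ := intervalIntegrable_norm_deriv_rpow hdiff hx₁ ht a b
  have hint₂ := intervalIntegrable_norm_deriv_rpow hdiff hx₂ ht a b
  constructor
  · have hlower := integral_rpow_le_rpow_mul_integral_rpow hab ht (pow_nonneg hratio.le 3)
      (fun _ ↦ norm_nonneg _) (fun _ ↦ norm_nonneg _)
      (norm_deriv_le_div_pow_three_mul hdiff hinj hx₁ hx) hint₁ hint₂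
    rw [← Real.rpow_natCast_mul hratio.le] at hlower
    rw [Real.rpow_neg hratio.le]
    exact (inv_mul_le_iff₀ (Real.rpow_pos_of_pos hratio _)).2 hlower
  · exact integral_rpow_le_rpow_mul_integral_rpow hab ht hratio.le (fun _ ↦ norm_nonneg _)
      (fun _ ↦ norm_nonneg _) (norm_deriv_le_div_mul hdiff hinj hx₁ hx) hint₂ hint₁

/-- Lemma 3.1 of the paper: comparison of integral means of `|φ'|^t` over vertical
segments on the lines `Re z = x` and `Re z = 1`. -/
theorem integral_means_comparison (φ : ℂ → ℂ)
    (hdiff : DifferentiableOn ℂ φ {z : ℂ | 0 < z.re})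
    (hinj : Set.InjOn φ {z : ℂ | 0 < z.re}) :
    ∀ x : ℝ, 1 < x → ∀ t : ℝ, 0 ≤ t → ∀ κ : ℝ, κ ∈ Set.Ioo (0 : ℝ) 1 →
      ∀ T : ℝ, 1 ≤ T →
      (2 : ℝ) ^ (-t) * x ^ (-(3 * t)) *
          (∫ y in (κ * T)..T, ‖deriv φ ((1 : ℂ) + (y : ℂ) * Complex.I)‖ ^ t)
        ≤ (∫ y in (κ * T)..T, ‖deriv φ ((x : ℂ) + (y : ℂ) * Complex.I)‖ ^ t) ∧
      (∫ y in (κ * T)..T, ‖deriv φ ((x : ℂ) + (y : ℂ) * Complex.I)‖ ^ t)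
        ≤ (8 : ℝ) ^ t * x ^ t *
          (∫ y in (κ * T)..T, ‖deriv φ ((1 : ℂ) + (y : ℂ) * Complex.I)‖ ^ t) := by
  intro x hx t ht κ hκ T hT
  have hκT : κ * T ≤ T := mul_le_of_le_one_left (by linarith) hκ.2.le
  have hmean : 0 ≤ ∫ y in (κ * T)..T, ‖deriv φ (1 + y * I)‖ ^ t :=
    integral_nonneg hκT fun y _ ↦ by positivity
  have : 0 < x := by linarith
  obtain ⟨hlower, hupper⟩ := integral_means_comparison_general hdiff hinj one_pos hx.le ht hκT
  rw [div_one, ofReal_one] at hlower hupper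
  rw [mul_assoc, mul_assoc]
  exact ⟨(mul_le_of_le_one_left (by positivity)
      (Real.rpow_le_one_of_one_le_of_nonpos one_le_two (by linarith))).trans hlower,
    hupper.trans (le_mul_of_one_le_left (by positivity) (Real.one_le_rpow (by norm_num) ht))⟩
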